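/- arXiv:1703.05277 — 3 statements merged into one kernel-verified Lean document; each statement's English description precedes it below -/
import Mathlib

section
/- Let u : ℝ → ℂ, λ₁ ∈ ℂ, and let η = (η₁,η₂) : ℝ → ℂ² be a differentiable solution of the KN spectral problem at λ₁ with potential u. Then for every x ∈ ℝ the function x ↦ d_{λ₁}(η(x),η(x)) is differentiable and (d/dx) d_{λ₁}(η(x),η(x)) = (λ₁² − conj(λ₁)²)[u(x)·conj(η₁(x))·η₂(x) − iλ₁|η₁(x)|² + i·conj(λ₁)|η₂(x)|²]. -/
/-!
Writing `|z|² = z * conj z` turns `d_λ(η,η)` into `λ η₁ conj η₁ + conj λ η₂ conj η₂`, which the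
product rule differentiates using the system and its complex conjugate. The terms carrying `conj u`
cancel, both having the coefficient `λ * conj λ` up to sign, and the remaining ones share the factor
`λ² - conj(λ)²`.
-/


open Complex

/-- The Pauli matrix `σ₃`. -/
def sigma3 : Matrix (Fin 2) (Fin 2) ℂ := !![1, 0; 0, -1]

/-- The potential matrix `Q(u) = [[0,u],[−conj(u),0]]`. -/
def Qmat (u : ℂ) : Matrix (Fin 2) (Fin 2) ℂ := !![0, u; -(starRingEnd ℂ u), 0]

/-- `ψ` solves the Kaup–Newell spectral problem at `λ` with potential `u`:
`ψ'(x) = (−iλ²σ₃ + λQ(u(x)))ψ(x)`. -/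
def SolvesKN (u : ℝ → ℂ) (l : ℂ) (ψ : ℝ → Fin 2 → ℂ) : Prop :=
  ∀ x : ℝ, HasDerivAt ψ (((-Complex.I * l ^ 2) • sigma3 + l • Qmat (u x)).mulVec (ψ x)) x

/-- The bilinear form `d_λ(η,η) := λ|η₁|² + conj(λ)|η₂|²`. -/
noncomputable def dForm (l : ℂ) (η : Fin 2 → ℂ) : ℂ :=
  l * (‖η 0‖ : ℂ) ^ 2 + (starRingEnd ℂ l) * (‖η 1‖ : ℂ) ^ 2

/-- `G_λ(η) := d_{conj(λ)}(η,η)/d_λ(η,η)`. -/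
noncomputable def Gop (l : ℂ) (η : Fin 2 → ℂ) : ℂ :=
  dForm (starRingEnd ℂ l) η / dForm l η

/-- `S_λ(η) := 2i(λ² − conj(λ)²)η₁conj(η₂)/d_λ(η,η)`. -/
noncomputable def Sop (l : ℂ) (η : Fin 2 → ℂ) : ℂ :=
  2 * Complex.I * (l ^ 2 - (starRingEnd ℂ l) ^ 2) * η 0 * (starRingEnd ℂ (η 1)) / dForm l η

/-- The Bäcklund transformation `B_λ(η)u := G_λ(η)(−G_λ(η)u + S_λ(η))`. -/
noncomputable def Bop (l : ℂ) (η : Fin 2 → ℂ) (u : ℂ) : ℂ :=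
  Gop l η * (-(Gop l η) * u + Sop l η)

theorem deriv_dForm (u : ℝ → ℂ) (l1 : ℂ) (η : ℝ → Fin 2 → ℂ)
    (hη : SolvesKN u l1 η) :
    ∀ x : ℝ, HasDerivAt (fun y => dForm l1 (η y))
      ((l1 ^ 2 - (starRingEnd ℂ l1) ^ 2) *
        (u x * starRingEnd ℂ (η x 0) * η x 1 - Complex.I * l1 * (‖η x 0‖ : ℂ) ^ 2 +
          Complex.I * starRingEnd ℂ l1 * (‖η x 1‖ : ℂ) ^ 2)) x := by
  intro x
  have h := hasDerivAt_pi.1 (hη x)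
  have h0 : HasDerivAt (fun y => η y 0)
      (-Complex.I * l1 ^ 2 * η x 0 + l1 * u x * η x 1) x := by
    refine (h 0).congr_deriv ?_
    simp [Matrix.mulVec, dotProduct, Fin.sum_univ_two, sigma3, Qmat]
  have h1 : HasDerivAt (fun y => η y 1)
      (Complex.I * l1 ^ 2 * η x 1 - l1 * starRingEnd ℂ (u x) * η x 0) x := by
    refine (h 1).congr_deriv ?_
    simp [Matrix.mulVec, dotProduct, Fin.sum_univ_two, sigma3, Qmat]
    ring
  have key := ((h0.mul h0.star).const_mul l1).add
    ((h1.mul h1.star).const_mul (starRingEnd ℂ l1))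
  simp only [dForm, ← Complex.mul_conj']
  refine key.congr_deriv ?_
  simp only [Complex.star_def, map_add, map_sub, map_mul, map_neg, map_pow, Complex.conj_I,
    Complex.conj_conj]
  ring
end

section
/- Let u : ℝ → ℂ, λ₁ ∈ ℂ, and let η = (η₁,η₂) : ℝ → ℂ² be a differentiable solution of the KN spectral problem at λ₁ with potential u, such that d_{λ₁}(η(x),η(x)) ≠ 0 for all x ∈ ℝ. Then x ↦ G_{λ₁}(η(x)) is differentiable and (d/dx) G_{λ₁}(η(x)) = (λ₁² − conj(λ₁)²)·d_{λ₁}(η(x),η(x))⁻² · [2i(λ₁² − conj(λ₁)²)|η₁(x)|²|η₂(x)|² − d_{λ₁}(η(x),η(x))·conj(u(x))·η₁(x)·conj(η₂(x)) − d_{conj(λ₁)}(η(x),η(x))·u(x)·conj(η₁(x))·η₂(x)]. -/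
/-!
Write `a, b` for the components of `η`, `l` for the spectral parameter and `A = |a|²`, `B = |b|²`.
Since `G = (conj l * A + l * B) / (l * A + conj l * B)` is a quotient of two linear forms in
`(A, B)`, the quotient rule gives `G' = (l² - conj l²) * (A * B' - A' * B) / d²`. The spectral
problem and its complex conjugate express `A'` and `B'` (via `A = a * conj a`, `B = b * conj b`)
in terms of `a, b, u`, and the claimed formula is then a polynomial identity.
-/

open Complex

/-- Derivative of `|f|²`, obtained from `|f|² = f * conj f`. -/
lemma hasDerivAt_norm_sq_ofReal {f : ℝ → ℂ} {f' : ℂ} {x : ℝ} (hf : HasDerivAt f f' x) :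
    HasDerivAt (fun y => (‖f y‖ : ℂ) ^ 2)
      (f' * starRingEnd ℂ (f x) + f x * starRingEnd ℂ f') x := by
  simp_rw [← Complex.mul_conj']
  exact hf.mul hf.star

theorem deriv_Gop (u : ℝ → ℂ) (l1 : ℂ) (η : ℝ → Fin 2 → ℂ)
    (hη : SolvesKN u l1 η) (hd : ∀ x : ℝ, dForm l1 (η x) ≠ 0) :
    ∀ x : ℝ, HasDerivAt (fun y => Gop l1 (η y))
      ((l1 ^ 2 - (starRingEnd ℂ l1) ^ 2) * (dForm l1 (η x)) ^ (-2 : ℤ) *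
        (2 * Complex.I * (l1 ^ 2 - (starRingEnd ℂ l1) ^ 2) *
            (‖η x 0‖ : ℂ) ^ 2 * (‖η x 1‖ : ℂ) ^ 2 -
          dForm l1 (η x) * starRingEnd ℂ (u x) * η x 0 * starRingEnd ℂ (η x 1) -
          dForm (starRingEnd ℂ l1) (η x) * u x * starRingEnd ℂ (η x 0) * η x 1)) x := by
  intro x
  have h := hasDerivAt_pi.1 (hη x)
  have h0 := hasDerivAt_norm_sq_ofReal (h 0)
  have h1 := hasDerivAt_norm_sq_ofReal (h 1)
  have hden := (h0.const_mul l1).add (h1.const_mul (starRingEnd ℂ l1))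
  have hnum := (h0.const_mul (starRingEnd ℂ l1)).add
    (h1.const_mul (starRingEnd ℂ (starRingEnd ℂ l1)))
  have hG := hnum.div hden (hd x)
  refine HasDerivAt.congr_deriv (f := fun y => Gop l1 (η y)) hG ?_
  simp only [dForm, Pi.add_apply, sigma3, Qmat, Matrix.mulVec, dotProduct, Fin.sum_univ_two,
    Matrix.add_apply, Matrix.smul_apply, Matrix.of_apply, Matrix.cons_val', Matrix.cons_val_zero,
    Matrix.cons_val_one, Matrix.cons_val_fin_one, smul_eq_mul, map_add, map_mul, map_neg, map_pow,
    map_zero, map_one, Complex.conj_I, Complex.conj_conj, ← Complex.mul_conj', zpow_neg]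
  rw [div_eq_mul_inv, show (2 : ℤ) = ((2 : ℕ) : ℤ) from rfl, zpow_natCast]
  ring
end

section
/- Let u : ℝ → ℂ, λ₁ ∈ ℂ, and let η = (η₁,η₂) : ℝ → ℂ² be a differentiable solution of the KN spectral problem at λ₁ with potential u, such that d_{λ₁}(η(x),η(x)) ≠ 0 for all x ∈ ℝ. Define u⁽¹⁾(x) := B_{λ₁}(η(x))u(x). Then x ↦ S_{λ₁}(η(x)) is differentiable and (d/dx) S_{λ₁}(η(x)) = −2i|λ₁|²·(u(x) + u⁽¹⁾(x)). -/
/-!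
Write `η = (a, b)`, `l = λ₁`, `m = conj l`. With `d = l|a|² + m|b|²` the spectral problem gives
`d' = (l² - m²)(-i(l|a|² - m|b|²) + u b conj a)`: the two terms containing `conj u` cancel.
As `(a conj b)'` does not involve `conj u` either, the quotient rule expresses the derivative of
`S = 2i(l² - m²) a conj b / d` through `u` alone, and comparing with `-2i l m (u + B u)` is a
polynomial identity after clearing the denominator `d²`.
-/

open Complex

/-- `dForm` with the squared moduli written as products `z * conj z`, so that it becomes a
polynomial in the components and their conjugates. -/
lemma dForm_eq_mul_conj (l : ℂ) (η : Fin 2 → ℂ) :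
    dForm l η = l * (η 0 * starRingEnd ℂ (η 0)) + starRingEnd ℂ l * (η 1 * starRingEnd ℂ (η 1)) := by
  simp only [dForm, Complex.mul_conj']

theorem deriv_Sop (u : ℝ → ℂ) (l1 : ℂ) (η : ℝ → Fin 2 → ℂ)
    (hη : SolvesKN u l1 η) (hd : ∀ x : ℝ, dForm l1 (η x) ≠ 0) :
    ∀ x : ℝ, HasDerivAt (fun y => Sop l1 (η y))
      (-2 * Complex.I * (‖l1‖ : ℂ) ^ 2 * (u x + Bop l1 (η x) (u x))) x := by
  intro x
  have h0 : HasDerivAt (fun y => η y 0)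
      (-Complex.I * l1 ^ 2 * η x 0 + l1 * u x * η x 1) x := by
    refine (hasDerivAt_pi.1 (hη x) 0).congr_deriv ?_
    simp [sigma3, Qmat, Matrix.mulVec, dotProduct, Fin.sum_univ_two]
  have h1 : HasDerivAt (fun y => η y 1)
      (Complex.I * l1 ^ 2 * η x 1 - l1 * starRingEnd ℂ (u x) * η x 0) x := by
    refine (hasDerivAt_pi.1 (hη x) 1).congr_deriv ?_
    simp [sigma3, Qmat, Matrix.mulVec, dotProduct, Fin.sum_univ_two]
    ring
  have h0c : HasDerivAt (fun y => starRingEnd ℂ (η y 0)) _ x := h0.star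
  have h1c : HasDerivAt (fun y => starRingEnd ℂ (η y 1)) _ x := h1.star
  have hD := hd x
  have hdD := ((h0.mul h0c).const_mul l1).add ((h1.mul h1c).const_mul (starRingEnd ℂ l1))
  have hN := (h0.const_mul (2 * Complex.I * (l1 ^ 2 - (starRingEnd ℂ l1) ^ 2))).mul h1c
  rw [dForm_eq_mul_conj] at hD
  have hS := hN.div hdD hD
  simp only [Sop, Bop, Gop, dForm_eq_mul_conj, ← Complex.mul_conj', Complex.conj_conj]
  refine hS.congr_deriv ?_
  simp only [Pi.mul_apply, Pi.add_apply, Complex.star_def, map_add, map_sub, map_mul, map_neg,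
    map_pow, Complex.conj_I, Complex.conj_conj]
  generalize starRingEnd ℂ (η x 0) = A at *
  generalize starRingEnd ℂ (η x 1) = B at *
  generalize starRingEnd ℂ l1 = m at *
  generalize starRingEnd ℂ (u x) = v at *
  generalize η x 0 = a at *
  generalize η x 1 = b at *
  -- The same nonvanishing in the left-associated form in which `field_simp` normalises `d`.
  have hD' : l1 * a * A + m * b * B ≠ 0 := by simpa only [mul_assoc] using hD
  field_simp
  ring
end
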